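/- Let L be a locally connected continuum in the plane ℝ² (a nonempty compact connected locally connected subset of ℝ²) and let p be a point lying in a bounded connected component of ℝ² \ L (so L separates p from infinity). Then there exists a simple closed curve J ⊆ L such that p lies in a bounded connected component of ℝ² \ J. -/

import Mathlib

/-- A simple closed curve in the plane: a subset homeomorphic to the unit circle, i.e.
the image of an injective continuous map from the circle into the plane. -/
def IsSimpleClosedCurve (C : Set (EuclideanSpace ℝ (Fin 2))) : Prop :=
  ∃ f : ↥(Metric.sphere (0 : EuclideanSpace ℝ (Fin 2)) 1) → EuclideanSpace ℝ (Fin 2),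
    Continuous f ∧ Function.Injective f ∧ Set.range f = C

section Helpers

open Set Filter Topology

def PStep {X : Type*} [MetricSpace X] (V : Set X) (ε : ℝ) (x y : X) : Prop :=
  ∃ W : Set X, IsOpen W ∧ IsPreconnected W ∧ W ⊆ V ∧ x ∈ W ∧ y ∈ W ∧
    ∀ a ∈ W, ∀ b ∈ W, dist a b ≤ ε

lemma pstep_near {X : Type*} [MetricSpace X] [LocallyConnectedSpace X] {V : Set X}
    (hV : IsOpen V) {ε : ℝ} (hε : 0 < ε) {x : X} (hx : x ∈ V) :
    ∃ W : Set X, IsOpen W ∧ x ∈ W ∧ ∀ a ∈ W, ∀ b ∈ W, PStep V ε a b := by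
  obtain ⟨W, hW, hWo, hxW, hWc⟩ :=
    locallyConnectedSpace_iff_subsets_isOpen_isConnected.1 ‹LocallyConnectedSpace X› x
      (V ∩ Metric.ball x (ε / 2))
      (inter_mem (hV.mem_nhds hx) (Metric.ball_mem_nhds x (by positivity)))
  refine ⟨W, hWo, hxW, fun a ha b hb => ⟨W, hWo, hWc.isPreconnected,
    fun z hz => (hW hz).1, ha, hb, fun a ha b hb => ?_⟩⟩
  have h1 := (hW ha).2
  have h2 := (hW hb).2
  rw [Metric.mem_ball] at h1 h2
  linarith [dist_triangle_right a b x]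

lemma pchain {X : Type*} [MetricSpace X] [LocallyConnectedSpace X] {V : Set X}
    (hV : IsOpen V) (hVc : IsPreconnected V) {ε : ℝ} (hε : 0 < ε) {x y : X}
    (hx : x ∈ V) (hy : y ∈ V) :
    ∃ k : ℕ, ∃ c : ℕ → X, c 0 = x ∧ (∀ j, k ≤ j → c j = y) ∧
      ∀ j, PStep V ε (c j) (c (j + 1)) := by
  have h : Relation.ReflTransGen (PStep V ε) x y := by
    refine hVc.induction₂' (Relation.ReflTransGen (PStep V ε)) ?_ ?_ hx hy
    · intro z hz
      obtain ⟨W, hWo, hzW, hW⟩ := pstep_near hV hε hz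
      filter_upwards [mem_nhdsWithin_of_mem_nhds (hWo.mem_nhds hzW)] with w hw
      exact ⟨.single (hW _ hzW _ hw), .single (hW _ hw _ hzW)⟩
    · intro _ _ _ _ _ _ h1 h2
      exact h1.trans h2
  induction h using Relation.ReflTransGen.head_induction_on with
  | refl =>
    refine ⟨0, fun _ => y, rfl, fun _ _ => rfl, fun _ => ?_⟩
    obtain ⟨W, hWo, hzW, hW⟩ := pstep_near hV hε hy
    exact hW _ hzW _ hzW
  | @head a b hab _ ih =>
    have hab' := hab
    obtain ⟨W, _, _, hWV, ha, hb, _⟩ := hab'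
    obtain ⟨k, c, h0, hk, hs⟩ := ih (hWV hb)
    refine ⟨k + 1, fun n => Nat.casesOn n a c, rfl, ?_, ?_⟩
    · intro j hj
      obtain ⟨j, rfl⟩ : ∃ i, j = i + 1 := ⟨j - 1, by omega⟩
      exact hk j (by omega)
    · intro j
      cases j with
      | zero => simpa [h0] using hab
      | succ j => exact hs j

lemma prefine {X : Type*} [MetricSpace X] [LocallyConnectedSpace X] {a b : X} {ε ε' : ℝ}
    (hε' : 0 < ε') (N : ℕ) (x : ℕ → X) (h0 : x 0 = a) (hN : 0 < N)
    (hb : ∀ j, N ≤ j → x j = b) (hs : ∀ j, PStep univ ε (x j) (x (j + 1))) :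
    ∃ M : ℕ, 0 < M ∧ ∃ x' : ℕ → X, x' 0 = a ∧ (∀ j, N * M ≤ j → x' j = b) ∧
      (∀ j, PStep univ ε' (x' j) (x' (j + 1))) ∧ ∀ j, dist (x' j) (x (j / M)) ≤ ε := by
  choose W hWo hWc _ hW1 hW2 hWd using hs
  have H := fun i => pchain (hWo i) (hWc i) hε' (hW1 i) (hW2 i)
  choose k c hc0 hck hcs using H
  have hcW : ∀ i j, c i j ∈ W i := fun i j => by
    obtain ⟨U, _, _, hU, h, _⟩ := hcs i j
    exact hU h
  have hε : 0 ≤ ε := dist_nonneg.trans (hWd 0 _ (hW1 0) _ (hW1 0))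
  set M := (Finset.range N).sup k + 1 with hM
  have hkM : ∀ i < N, k i ≤ M := fun i hi =>
    (Finset.le_sup (f := k) (Finset.mem_range.2 hi)).trans (by omega)
  have hM0 : 0 < M := by omega
  refine ⟨M, hM0, fun j => if j / M < N then c (j / M) (j % M) else b, ?_, ?_, ?_, ?_⟩
  · simp [hN, hc0, h0]
  · intro j hj
    have : N ≤ j / M := (Nat.le_div_iff_mul_le hM0).2 hj
    simp [this]
  · intro j
    have hmod : j % M < M := Nat.mod_lt _ hM0
    have hdiv := Nat.div_add_mod j M
    obtain hr | hr : j % M + 1 < M ∨ j % M + 1 = M := by omega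
    · have e1 : (j + 1) / M = j / M := by
        rw [Nat.div_eq_iff hM0]
        constructor
        · rw [mul_comm]; omega
        · rw [mul_comm]; omega
      have e2 : (j + 1) % M = j % M + 1 := by
        have := Nat.div_add_mod (j + 1) M
        rw [e1] at this; omega
      simp only [e1, e2]
      split_ifs with h
      · obtain ⟨U, a1, a2, _, a3⟩ := hcs (j / M) (j % M)
        exact ⟨U, a1, a2, subset_univ _, a3⟩
      · obtain ⟨U, a1, a2, a3⟩ := pstep_near isOpen_univ hε' (mem_univ b)
        exact a3 _ a2 _ a2
    · have e1 : (j + 1) / M = j / M + 1 := by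
        rw [Nat.div_eq_iff hM0]
        have : (j / M + 1) * M = M * (j / M) + M := by ring
        rw [this]
        omega
      have e2 : (j + 1) % M = 0 := by
        have := Nat.div_add_mod (j + 1) M
        rw [e1, mul_add] at this; omega
      simp only [e1, e2]
      by_cases h : j / M < N
      · have hend : (if j / M + 1 < N then c (j / M + 1) 0 else b) = c (j / M) (j % M + 1) := by
          rw [hr, hck _ _ (hkM _ h)]
          split_ifs with h'
          · exact hc0 _
          · exact (hb _ (by omega)).symm
        rw [hend, if_pos h]
        obtain ⟨U, a1, a2, _, a3⟩ := hcs (j / M) (j % M)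
        exact ⟨U, a1, a2, subset_univ _, a3⟩
      · rw [if_neg h, if_neg (by omega)]
        obtain ⟨U, a1, a2, a3⟩ := pstep_near isOpen_univ hε' (mem_univ b)
        exact a3 _ a2 _ a2
  · intro j
    dsimp only
    split_ifs with h
    · exact hWd _ _ (hcW _ _) _ (hW1 _)
    · rw [hb _ (by omega), dist_self]; exact hε

lemma exists_path_of_mem_component {X : Type*} [MetricSpace X] [CompleteSpace X]
    [LocallyConnectedSpace X] {a b : X} (hab : b ∈ connectedComponent a) :
    ∃ γ : ℝ → X, Continuous γ ∧ γ 0 = a ∧ γ 1 = b := by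
  let S : ℕ → Type _ := fun n => {s : ℕ × (ℕ → X) // 0 < s.1 ∧ s.2 0 = a ∧
    (∀ j, s.1 ≤ j → s.2 j = b) ∧ ∀ j, PStep univ (1 * (1 / 2 : ℝ) ^ n) (s.2 j) (s.2 (j + 1))}
  have hstep : ∀ n (s : S n), ∃ s' : S (n + 1), ∃ M : ℕ, 0 < M ∧ s'.1.1 = s.1.1 * M ∧
      ∀ j, dist (s'.1.2 j) (s.1.2 (j / M)) ≤ 1 * (1 / 2 : ℝ) ^ n := by
    rintro n ⟨⟨N, x⟩, hN, h0, hb, hs⟩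
    obtain ⟨M, hM, x', h1, h2, h3, h4⟩ := prefine
      (show (0 : ℝ) < 1 * (1 / 2 : ℝ) ^ (n + 1) by positivity) N x h0 hN hb hs
    exact ⟨⟨⟨N * M, x'⟩, Nat.mul_pos hN hM, h1, h2, h3⟩, M, hM, rfl, h4⟩
  have hs0 : Nonempty (S 0) := by
    obtain ⟨k, c, h0, hk, hs⟩ := pchain (V := connectedComponent a)
      isOpen_connectedComponent isPreconnected_connectedComponent
      (show (0 : ℝ) < 1 * (1 / 2 : ℝ) ^ 0 by positivity) mem_connectedComponent hab
    refine ⟨⟨⟨k + 1, c⟩, by simp, h0, fun j hj => hk j (by simp at hj; omega), fun j => ?_⟩⟩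
    obtain ⟨U, a1, a2, _, a3⟩ := hs j
    exact ⟨U, a1, a2, subset_univ _, a3⟩
  choose nx hnx using hstep
  let sq : ∀ n, S n := fun n => Nat.rec hs0.some (fun n s => nx n s) n
  have hsq : ∀ n, sq (n + 1) = nx n (sq n) := fun n => rfl
  let g : ℕ → ℝ → X := fun n t => (sq n).1.2 ⌊t * (sq n).1.1⌋₊
  have hg : ∀ t n, dist (g n t) (g (n + 1) t) ≤ 1 * (1 / 2 : ℝ) ^ n := by
    intro t n
    obtain ⟨M, hM, hN, hd⟩ := hnx n (sq n)
    rw [← hsq] at hN hd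
    have h := hd ⌊t * (sq (n + 1)).1.1⌋₊
    have : ⌊t * (sq (n + 1)).1.1⌋₊ / M = ⌊t * (sq n).1.1⌋₊ := by
      rw [hN]; push_cast
      rw [← mul_assoc, Nat.mul_cast_floor_div_cancel hM.ne']
    rw [this] at h
    rw [dist_comm]; exact h
  have hlim : ∀ t, ∃ y, Tendsto (fun n => g n t) atTop (𝓝 y) := fun t =>
    cauchySeq_tendsto_of_complete (cauchySeq_of_le_geometric (1 / 2) 1 (by norm_num) (hg t))
  choose γ hγ using hlim
  have hclose : ∀ t n, dist (g n t) (γ t) ≤ 1 * (1 / 2 : ℝ) ^ n / (1 - 1 / 2) := fun t n =>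
    dist_le_of_le_geometric_of_tendsto (1 / 2) 1 (by norm_num) (hg t) (hγ t) n
  have hfl : ∀ u v : ℝ, u ≤ v → v < u + 1 → ⌊v⌋₊ = ⌊u⌋₊ ∨ ⌊v⌋₊ = ⌊u⌋₊ + 1 := by
    intro u v h1 h2
    have h3 := Nat.floor_le_floor h1
    rcases le_or_gt 0 u with hu | hu
    · have h4 := Nat.floor_le_floor h2.le
      rw [Nat.floor_add_one hu] at h4
      omega
    · left
      rw [Nat.floor_of_nonpos hu.le, Nat.floor_eq_zero]; linarith
  have hosc' : ∀ (n : ℕ) (t t' : ℝ), t ≤ t' → (t' - t) * ((sq n).1.1 : ℝ) < 1 →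
      dist (g n t) (g n t') ≤ 1 * (1 / 2 : ℝ) ^ n := by
    intro n t t' h1 h2
    have hN : (0 : ℝ) < (sq n).1.1 := by exact_mod_cast (sq n).2.1
    rcases hfl (t * (sq n).1.1) (t' * (sq n).1.1) (by nlinarith) (by nlinarith) with h | h
    · simp only [g, h, dist_self]; positivity
    · simp only [g, h]
      obtain ⟨U, _, _, _, a1, a2, a3⟩ := (sq n).2.2.2.2 ⌊t * (sq n).1.1⌋₊
      exact a3 _ a1 _ a2
  have hosc : ∀ (n : ℕ) (t t' : ℝ), |t' - t| * ((sq n).1.1 : ℝ) < 1 →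
      dist (g n t) (g n t') ≤ 1 * (1 / 2 : ℝ) ^ n := by
    intro n t t' h
    rcases le_total t t' with h1 | h1
    · exact hosc' n t t' h1 (by rwa [abs_of_nonneg (by linarith)] at h)
    · rw [dist_comm]
      exact hosc' n t' t h1 (by rwa [abs_sub_comm, abs_of_nonneg (by linarith)] at h)
  refine ⟨γ, ?_, ?_, ?_⟩
  · rw [Metric.continuous_iff]
    intro t ε hε
    obtain ⟨n, hn⟩ := exists_pow_lt_of_lt_one (show 0 < ε / 6 by positivity)
      (show (1 / 2 : ℝ) < 1 by norm_num)
    have hN : (0 : ℝ) < (sq n).1.1 := by exact_mod_cast (sq n).2.1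
    refine ⟨1 / (sq n).1.1, by positivity, fun t' ht' => ?_⟩
    have h1 := hosc n t t' (by rwa [Real.dist_eq, lt_div_iff₀ hN] at ht')
    have h2 := hclose t n
    have h3 := hclose t' n
    have h4 := dist_triangle4 (γ t') (g n t') (g n t) (γ t)
    rw [dist_comm (γ t') (g n t'), dist_comm (g n t') (g n t)] at h4
    norm_num at h1 h2 h3 hn
    linarith
  · refine tendsto_nhds_unique (hγ 0) ?_
    have : (fun n => g n 0) = fun _ => a := by
      ext n; simpa [g] using (sq n).2.2.1
    rw [this]; exact tendsto_const_nhds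
  · refine tendsto_nhds_unique (hγ 1) ?_
    have : (fun n => g n 1) = fun _ => b := by
      ext n; simpa [g] using (sq n).2.2.2.1 _ le_rfl
    rw [this]; exact tendsto_const_nhds

/-- Closed subsets of `[0,1]` all of whose gaps are collapsed by `γ`. -/
def GoodSet (γ : ℝ → ℂ) (K : Set ℝ) : Prop :=
  IsClosed K ∧ K ⊆ Icc 0 1 ∧ (0 : ℝ) ∈ K ∧ (1 : ℝ) ∈ K ∧
    ∀ u ∈ K, ∀ v ∈ K, u < v → (∀ x ∈ K, u < x → x < v → False) → γ u = γ v

lemma goodSet_sInter {γ : ℝ → ℂ} (hγ : Continuous γ) {c : Set (Set ℝ)}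
    (hc : ∀ K ∈ c, GoodSet γ K) (hch : IsChain (· ⊆ ·) c) (hne : c.Nonempty) :
    GoodSet γ (⋂₀ c) := by
  obtain ⟨K₀, hK₀⟩ := hne
  refine ⟨isClosed_sInter fun K hK => (hc K hK).1, fun x hx => (hc K₀ hK₀).2.1 (hx K₀ hK₀),
    fun K hK => (hc K hK).2.2.1, fun K hK => (hc K hK).2.2.2.1, ?_⟩
  intro u hu v hv huv hgap
  by_contra hne
  have hopen : IsOpen {q : ℝ × ℝ | γ q.1 ≠ γ q.2} :=
    isOpen_ne_fun (hγ.comp continuous_fst) (hγ.comp continuous_snd)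
  obtain ⟨δ₀, hδ₀, hball⟩ := Metric.isOpen_iff.1 hopen (u, v) hne
  obtain ⟨δ, hδ, hδ1, hδ2⟩ : ∃ δ > 0, δ < δ₀ ∧ δ < (v - u) / 2 :=
    ⟨min δ₀ ((v - u) / 2) / 2, by
      have : 0 < min δ₀ ((v - u) / 2) := lt_min hδ₀ (by linarith)
      exact ⟨by linarith, by linarith [min_le_left δ₀ ((v - u) / 2)],
        by linarith [min_le_right δ₀ ((v - u) / 2)]⟩⟩
  have : Nonempty c := ⟨⟨K₀, hK₀⟩⟩
  obtain ⟨⟨s, hsc⟩, hs⟩ : ∃ s : c, Icc (u + δ) (v - δ) ∩ s.1 = ∅ := by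
    refine IsCompact.elim_directed_family_closed (isCompact_Icc (a := u + δ) (b := v - δ))
      (fun s : c => s.1) (fun s => (hc s.1 s.2).1) ?_ ?_
    · rw [eq_empty_iff_forall_notMem]
      rintro x ⟨hx, hx'⟩
      refine hgap x (fun K hK => mem_iInter.1 hx' ⟨K, hK⟩) ?_ ?_
      · linarith [hx.1]
      · linarith [hx.2]
    · rintro ⟨A, hA⟩ ⟨B, hB⟩
      rcases hch.total hA hB with h | h
      · exact ⟨⟨A, hA⟩, subset_rfl, h⟩
      · exact ⟨⟨B, hB⟩, h, subset_rfl⟩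
  have hcs := hc s hsc
  have hus := hu s hsc
  have hvs := hv s hsc
  have hmid : ∀ x ∈ s, u + δ ≤ x → x ≤ v - δ → False := fun x hx h1 h2 => by
    have : x ∈ Icc (u + δ) (v - δ) ∩ s := ⟨⟨h1, h2⟩, hx⟩
    rw [hs] at this; exact this
  obtain ⟨u', hu', hu'g⟩ := (isCompact_Icc.inter_left hcs.1).exists_isGreatest
    (s := s ∩ Icc u (v - δ)) ⟨u, hus, le_rfl, by linarith⟩
  obtain ⟨v', hv', hv'l⟩ := (isCompact_Icc.inter_left hcs.1).exists_isLeast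
    (s := s ∩ Icc (u + δ) v) ⟨v, hvs, by linarith, le_rfl⟩
  have h1 : u' < u + δ := by
    by_contra h; exact hmid u' hu'.1 (not_lt.1 h) hu'.2.2
  have h2 : v - δ < v' := by
    by_contra h; exact hmid v' hv'.1 hv'.2.1 (not_lt.1 h)
  have h3 : γ u' = γ v' := by
    refine hcs.2.2.2.2 u' hu'.1 v' hv'.1 (by linarith) fun x hx hx1 hx2 => ?_
    rcases le_or_gt x (v - δ) with h | h
    · exact absurd (hu'g ⟨hx, by linarith [hu'.2.1], h⟩) (not_le.2 hx1)
    · exact absurd (hv'l ⟨hx, by linarith, by linarith [hv'.2.2]⟩) (not_le.2 hx2)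
  refine hball (a := (u', v')) ?_ h3
  rw [Metric.mem_ball, Prod.dist_eq, max_lt_iff, Real.dist_eq, Real.dist_eq, abs_lt, abs_lt]
  have := hu'.2.1
  have := hv'.2.2
  refine ⟨⟨?_, ?_⟩, ?_, ?_⟩ <;> dsimp only <;> linarith

lemma exists_minimal_goodSet {γ : ℝ → ℂ} (hγ : Continuous γ) :
    ∃ K, GoodSet γ K ∧ ∀ K', GoodSet γ K' → K' ⊆ K → K ⊆ K' := by
  obtain ⟨K, hK⟩ := zorn_superset {K | GoodSet γ K} (by
    intro c hc hch
    rcases c.eq_empty_or_nonempty with rfl | hne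
    · refine ⟨Icc 0 1, ⟨isClosed_Icc, subset_rfl, by simp, by simp, ?_⟩, by simp⟩
      intro u hu v hv huv h
      exact (h ((u + v) / 2) ⟨by linarith [hu.1, hv.1], by linarith [hu.2, hv.2]⟩
        (by linarith) (by linarith)).elim
    · exact ⟨⋂₀ c, goodSet_sInter hγ hc hch hne, fun s hs => sInter_subset_of_mem hs⟩)
  exact ⟨K, hK.1, fun K' h1 h2 => hK.2 h1 h2⟩

/-- A path can be replaced by a monotone one. -/
lemma exists_monotone_path {γ : ℝ → ℂ} (hγ : Continuous γ) :
    ∃ β : ℝ → ℂ, Continuous β ∧ β 0 = γ 0 ∧ β 1 = γ 1 ∧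
      (∀ t ∈ Icc (0 : ℝ) 1, ∃ x ∈ Icc (0 : ℝ) 1, β t = γ x) ∧
      ∀ s ∈ Icc (0 : ℝ) 1, ∀ t ∈ Icc (0 : ℝ) 1, β s = β t → ∀ x ∈ Icc s t, β x = β s := by
  obtain ⟨K, hK, hmin⟩ := exists_minimal_goodSet hγ
  obtain ⟨hcl, hKI, h0, h1, hgap⟩ := hK
  have hr : ∀ t ∈ Icc (0 : ℝ) 1, ∃ r, IsGreatest (K ∩ Icc 0 t) r := fun t ht =>
    (isCompact_Icc.inter_left hcl).exists_isGreatest ⟨0, h0, le_rfl, ht.1⟩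
  have hl : ∀ t ∈ Icc (0 : ℝ) 1, ∃ r, IsLeast (K ∩ Icc t 1) r := fun t ht =>
    (isCompact_Icc.inter_left hcl).exists_isLeast ⟨1, h1, ht.2, le_rfl⟩
  choose! r hr using hr
  choose! l hl using hl
  have hrK : ∀ t ∈ Icc (0 : ℝ) 1, r t ∈ K := fun t ht => (hr t ht).1.1
  have hrl : ∀ t ∈ Icc (0 : ℝ) 1, γ (r t) = γ (l t) := by
    intro t ht
    have a1 := (hr t ht).1.2.2
    have a2 := (hl t ht).1.2.1
    rcases (a1.trans a2).eq_or_lt with h | h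
    · rw [h]
    · refine hgap _ (hrK t ht) _ (hl t ht).1.1 h fun x hx b1 b2 => ?_
      rcases le_total x t with h | h
      · exact absurd ((hr t ht).2 ⟨hx, (hKI hx).1, h⟩) (not_le.2 b1)
      · exact absurd ((hl t ht).2 ⟨hx, h, (hKI hx).2⟩) (not_le.2 b2)
  have hrm : ∀ s ∈ Icc (0 : ℝ) 1, ∀ t ∈ Icc (0 : ℝ) 1, s ≤ t → r s ≤ r t := fun s hs t ht h =>
    (hr t ht).2 ⟨hrK s hs, (hr s hs).1.2.1, (hr s hs).1.2.2.trans h⟩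
  have key : ∀ s ∈ Icc (0 : ℝ) 1, ∀ t ∈ Icc (0 : ℝ) 1, s ≤ t → γ (r s) = γ (r t) ∨
      ∃ w ∈ Icc s t, ∃ w' ∈ Icc s t, γ (r s) = γ w ∧ γ (r t) = γ w' := by
    intro s hs t ht hst
    by_cases h : ∃ k ∈ K, k ∈ Icc s t
    · obtain ⟨k, hk, hk1, hk2⟩ := h
      right
      refine ⟨l s, ⟨(hl s hs).1.2.1, ?_⟩, r t, ⟨?_, (hr t ht).1.2.2⟩, hrl s hs, rfl⟩
      · exact ((hl s hs).2 ⟨hk, hk1, (hKI hk).2⟩).trans hk2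
      · exact hk1.trans ((hr t ht).2 ⟨hk, (hKI hk).1, hk2⟩)
    · left
      congr 1
      refine le_antisymm (hrm s hs t ht hst) ((hr s hs).2 ⟨hrK t ht, (hr t ht).1.2.1, ?_⟩)
      by_contra h'
      exact h ⟨r t, hrK t ht, (not_le.1 h').le, (hr t ht).1.2.2⟩
  have hcont : ContinuousOn (fun t => γ (r t)) (Icc 0 1) := by
    have huc := isCompact_Icc.uniformContinuousOn_of_continuous
      (hγ.continuousOn (s := Icc (0 : ℝ) 1))
    apply UniformContinuousOn.continuousOn
    rw [Metric.uniformContinuousOn_iff] at huc ⊢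
    intro ε hε
    obtain ⟨δ, hδ, H⟩ := huc ε hε
    have H' : ∀ s ∈ Icc (0 : ℝ) 1, ∀ t ∈ Icc (0 : ℝ) 1, s ≤ t → dist s t < δ →
        dist (γ (r s)) (γ (r t)) < ε := by
      intro s hs t ht hst hd
      rcases key s hs t ht hst with h | ⟨w, hw, w', hw', e1, e2⟩
      · rw [h, dist_self]; exact hε
      · rw [e1, e2]
        refine H w ⟨hs.1.trans hw.1, hw.2.trans ht.2⟩ w' ⟨hs.1.trans hw'.1, hw'.2.trans ht.2⟩ ?_
        exact (Real.dist_le_of_mem_Icc hw hw').trans_lt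
          (by rwa [dist_comm, Real.dist_eq, abs_of_nonneg (by linarith)] at hd)
    refine ⟨δ, hδ, fun s hs t ht hd => ?_⟩
    rcases le_total s t with h | h
    · exact H' s hs t ht h hd
    · rw [dist_comm] at hd ⊢
      exact H' t ht s hs h hd
  have key2 : ∀ s ∈ Icc (0 : ℝ) 1, ∀ t ∈ Icc (0 : ℝ) 1, γ (r s) = γ (r t) →
      ∀ x ∈ Icc s t, γ (r x) = γ (r s) := by
    intro s hs t ht heq x hx
    have hxI : x ∈ Icc (0 : ℝ) 1 := ⟨hs.1.trans hx.1, hx.2.trans ht.2⟩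
    have m1 := hrm s hs x hxI hx.1
    have m2 := hrm x hxI t ht hx.2
    have hgood : GoodSet γ (K \ Ioo (r s) (r t)) := by
      refine ⟨hcl.sdiff isOpen_Ioo, fun y hy => hKI hy.1,
        ⟨h0, fun h => absurd h.1 (not_lt.2 (hr s hs).1.2.1)⟩,
        ⟨h1, fun h => absurd h.2 (not_lt.2 (hKI (hrK t ht)).2)⟩, ?_⟩
      rintro u ⟨hu, hu'⟩ v ⟨hv, hv'⟩ huv hg
      by_cases hh : ∃ y ∈ K, u < y ∧ y < v
      · obtain ⟨y, hy, hy1, hy2⟩ := hh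
        by_cases hy3 : y ∈ Ioo (r s) (r t)
        · have c1 : u ≤ r s := by
            by_contra c; exact hu' ⟨not_le.1 c, hy1.trans hy3.2⟩
          have c2 : r t ≤ v := by
            by_contra c; exact hv' ⟨hy3.1.trans hy2, not_le.1 c⟩
          have c3 : u = r s := by
            by_contra c
            exact hg (r s) ⟨hrK s hs, fun h => lt_irrefl _ h.1⟩ (lt_of_le_of_ne c1 c)
              (hy3.1.trans hy2)
          have c4 : v = r t := by
            by_contra c
            exact hg (r t) ⟨hrK t ht, fun h => lt_irrefl _ h.2⟩ (hy1.trans hy3.2)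
              (lt_of_le_of_ne c2 (Ne.symm c))
          rw [c3, c4, heq]
        · exact (hg y ⟨hy, hy3⟩ hy1 hy2).elim
      · exact hgap u hu v hv huv fun y hy a b => hh ⟨y, hy, a, b⟩
    have hsub := hmin _ hgood sdiff_subset
    have := (hsub (hrK x hxI)).2
    rcases m1.eq_or_lt with h | h
    · rw [h]
    · rcases m2.eq_or_lt with h' | h'
      · rw [h', heq]
      · exact (this ⟨h, h'⟩).elim
  have hcl01 : ∀ t ∈ Icc (0 : ℝ) 1, max 0 (min t 1) = t := fun t ht => by
    rw [min_eq_left ht.2, max_eq_right ht.1]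
  refine ⟨fun t => γ (r (max 0 (min t 1))), ?_, ?_, ?_, ?_, ?_⟩
  · refine hcont.comp_continuous (f := fun t : ℝ => max 0 (min t 1)) (by fun_prop) fun t => ?_
    exact ⟨le_max_left _ _, max_le zero_le_one (min_le_right _ _)⟩
  · have : r 0 = 0 := le_antisymm (hr 0 (by simp)).1.2.2 (hr 0 (by simp)).1.2.1
    simp [this]
  · have : r 1 = 1 := le_antisymm (hr 1 (by simp)).1.2.2 ((hr 1 (by simp)).2 ⟨h1, by simp⟩)
    simp [this]
  · intro t ht
    simp only [hcl01 t ht]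
    exact ⟨r t, hKI (hrK t ht), rfl⟩
  · intro s hs t ht h x hx
    have hxI : x ∈ Icc (0 : ℝ) 1 := ⟨hs.1.trans hx.1, hx.2.trans ht.2⟩
    simp only [hcl01 s hs, hcl01 t ht, hcl01 x hxI] at h ⊢
    exact key2 s hs t ht h x hx

/-- A continuous monotone function with the same fibres as the monotone path `β`. -/
lemma exists_fibre_function {β : ℝ → ℂ} (hβ : Continuous β)
    (hm : ∀ s ∈ Icc (0 : ℝ) 1, ∀ t ∈ Icc (0 : ℝ) 1, β s = β t → ∀ x ∈ Icc s t, β x = β s) :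
    ∃ φ : ℝ → ℝ, Continuous φ ∧
      (∀ s ∈ Icc (0 : ℝ) 1, ∀ t ∈ Icc (0 : ℝ) 1, s ≤ t → β s = β t → φ s = φ t) ∧
      (∀ s ∈ Icc (0 : ℝ) 1, ∀ t ∈ Icc (0 : ℝ) 1, s ≤ t → φ s ≤ φ t) ∧
      (∀ s ∈ Icc (0 : ℝ) 1, ∀ t ∈ Icc (0 : ℝ) 1, s ≤ t → β s ≠ β t → φ s < φ t) := by
  let q : ℕ → ℂ × ℝ := TopologicalSpace.denseSeq (ℂ × ℝ)
  let G : ℕ → ℂ → ℝ := fun n z => min 1 (max 0 ((q n).2 - dist z (q n).1))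
  have hG0 : ∀ n z, 0 ≤ G n z := fun n z => le_min zero_le_one (le_max_left _ _)
  have hG1 : ∀ n z, G n z ≤ 1 := fun n z => min_le_left _ _
  have hGc : ∀ n, Continuous (G n) := fun n => by fun_prop
  let h : ℕ → ℝ → ℝ := fun n t => sSup ((fun u => G n (β (min u t))) '' Icc (0 : ℝ) 1)
  have hhc : ∀ n, Continuous (h n) := fun n => by
    refine isCompact_Icc.continuous_sSup (f := fun t u => G n (β (min u t))) ?_
    have := hGc n
    change Continuous fun x : ℝ × ℝ => G n (β (min x.2 x.1))
    fun_prop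
  have hbdd : ∀ n t, BddAbove ((fun u => G n (β (min u t))) '' Icc (0 : ℝ) 1) := fun n t =>
    ⟨1, by rintro _ ⟨u, _, rfl⟩; exact hG1 _ _⟩
  have hne : ∀ n t, ((fun u => G n (β (min u t))) '' Icc (0 : ℝ) 1).Nonempty := fun n t =>
    (nonempty_Icc.2 zero_le_one).image _
  have hh1 : ∀ n t, h n t ≤ 1 := fun n t =>
    csSup_le (hne n t) (by rintro _ ⟨u, _, rfl⟩; exact hG1 _ _)
  have hle : ∀ n t, ∀ u ∈ Icc (0 : ℝ) 1, G n (β (min u t)) ≤ h n t := fun n t u hu =>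
    le_csSup (hbdd n t) ⟨u, hu, rfl⟩
  have hh0 : ∀ n t, 0 ≤ h n t := fun n t =>
    (hG0 n _).trans (hle n t 0 (by simp))
  have hmono : ∀ n, ∀ s ∈ Icc (0 : ℝ) 1, ∀ t ∈ Icc (0 : ℝ) 1, s ≤ t → h n s ≤ h n t := by
    intro n s hs t ht hst
    refine csSup_le (hne n s) ?_
    rintro _ ⟨u, hu, rfl⟩
    have := hle n t (min u s) ⟨le_min hu.1 hs.1, (min_le_left _ _).trans hu.2⟩
    rwa [min_eq_left ((min_le_right u s).trans hst)] at this
  have hbound : ∀ n t, ‖(1 / 2 : ℝ) ^ n * h n t‖ ≤ (1 / 2 : ℝ) ^ n := fun n t => by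
    rw [Real.norm_of_nonneg (mul_nonneg (by positivity) (hh0 n t))]
    exact mul_le_of_le_one_right (by positivity) (hh1 n t)
  have hsum : ∀ t, Summable fun n => (1 / 2 : ℝ) ^ n * h n t := fun t =>
    Summable.of_norm_bounded summable_geometric_two fun n => hbound n t
  refine ⟨fun t => ∑' n, (1 / 2 : ℝ) ^ n * h n t, ?_, ?_, ?_, ?_⟩
  · exact continuous_tsum (fun n => continuous_const.mul (hhc n)) summable_geometric_two hbound
  · intro s hs t ht hst heq
    have : ∀ n, h n s = h n t := fun n => by
      have : (fun u => G n (β (min u s))) = fun u => G n (β (min u t)) := by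
        ext u
        rcases le_total u s with h | h
        · rw [min_eq_left h, min_eq_left (h.trans hst)]
        · rw [min_eq_right h, hm s hs t ht heq (min u t) ⟨le_min h hst, min_le_right _ _⟩]
      simp only [h, this]
    simp only [this]
  · intro s hs t ht hst
    exact (hsum s).tsum_le_tsum (fun n => by have := hmono n s hs t ht hst; gcongr) (hsum t)
  · intro s hs t ht hst hneq
    have hcomp : IsCompact (β '' Icc 0 s) := isCompact_Icc.image hβ
    have hnot : β t ∉ β '' Icc 0 s := by
      rintro ⟨x, hx, hxt⟩
      have := hm x ⟨hx.1, hx.2.trans hs.2⟩ t ht hxt s ⟨hx.2, hst⟩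
      exact hneq (this.trans hxt)
    obtain ⟨ρ, hρ, hball⟩ := Metric.isOpen_iff.1 hcomp.isClosed.isOpen_compl _ hnot
    obtain ⟨n, hn⟩ : ∃ n, q n ∈ Metric.ball (β t) (ρ / 4) ×ˢ Ioo (ρ / 4) (3 * ρ / 4) := by
      have := (TopologicalSpace.denseRange_denseSeq (ℂ × ℝ)).exists_mem_open
        (Metric.isOpen_ball.prod isOpen_Ioo : IsOpen
          (Metric.ball (β t) (ρ / 4) ×ˢ Ioo (ρ / 4) (3 * ρ / 4)))
        ⟨(β t, ρ / 2), by simp [hρ], by constructor <;> linarith⟩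
      exact this
    obtain ⟨hn1, hn2, hn3⟩ := hn
    rw [Metric.mem_ball] at hn1
    have hs0 : h n s ≤ 0 := by
      refine csSup_le (hne n s) ?_
      rintro _ ⟨u, hu, rfl⟩
      have hfar : ρ ≤ dist (β (min u s)) (β t) := by
        by_contra hc
        exact hball (Metric.mem_ball.2 (not_le.1 hc))
          ⟨min u s, ⟨le_min hu.1 hs.1, min_le_right _ _⟩, rfl⟩
      have := dist_triangle (β (min u s)) (q n).1 (β t)
      refine (min_le_right _ _).trans (max_le le_rfl ?_)
      linarith
    have ht0 : 0 < h n t := by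
      refine lt_of_lt_of_le ?_ (hle n t 1 (by simp))
      rw [min_eq_right ht.2]
      refine lt_min zero_lt_one (lt_max_of_lt_right ?_)
      rw [dist_comm] at hn1
      linarith
    refine Summable.tsum_lt_tsum (i := n)
      (fun n => by have := hmono n s hs t ht hst; gcongr) ?_ (hsum s) (hsum t)
    have : h n s < h n t := hs0.trans_lt ht0
    gcongr

lemma exists_arc {γ : ℝ → ℂ} (hγ : Continuous γ) (hne : γ 0 ≠ γ 1) :
    ∃ c d : ℝ, c < d ∧ ∃ α : ℝ → ℂ, ContinuousOn α (Icc c d) ∧ InjOn α (Icc c d) ∧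
      α c = γ 0 ∧ α d = γ 1 ∧ ∀ y ∈ Icc c d, ∃ x ∈ Icc (0 : ℝ) 1, α y = γ x := by
  obtain ⟨β, hβ, hβ0, hβ1, hrange, hm⟩ := exists_monotone_path hγ
  obtain ⟨φ, hφ, heq, hle, hlt⟩ := exists_fibre_function hβ hm
  have z0 : (0 : ℝ) ∈ Icc (0 : ℝ) 1 := by simp
  have z1 : (1 : ℝ) ∈ Icc (0 : ℝ) 1 := by simp
  have heq' : ∀ s ∈ Icc (0 : ℝ) 1, ∀ t ∈ Icc (0 : ℝ) 1, β s = β t → φ s = φ t := by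
    intro s hs t ht h
    rcases le_total s t with h' | h'
    · exact heq s hs t ht h' h
    · exact (heq t ht s hs h' h.symm).symm
  have heq'' : ∀ s ∈ Icc (0 : ℝ) 1, ∀ t ∈ Icc (0 : ℝ) 1, φ s = φ t → β s = β t := by
    intro s hs t ht h
    by_contra hc
    rcases le_total s t with h' | h'
    · exact (hlt s hs t ht h' hc).ne h
    · exact (hlt t ht s hs h' (Ne.symm hc)).ne h.symm
  have hσ : ∀ y ∈ Icc (φ 0) (φ 1), ∃ x ∈ Icc (0 : ℝ) 1, φ x = y := fun y hy =>
    intermediate_value_Icc zero_le_one hφ.continuousOn hy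
  choose! σ hσ1 hσ2 using hσ
  have hcd : φ 0 < φ 1 := hlt 0 z0 1 z1 zero_le_one (by rw [hβ0, hβ1]; exact hne)
  have m0 : φ 0 ∈ Icc (φ 0) (φ 1) := ⟨le_rfl, hcd.le⟩
  have m1 : φ 1 ∈ Icc (φ 0) (φ 1) := ⟨hcd.le, le_rfl⟩
  refine ⟨φ 0, φ 1, hcd, fun y => β (σ y), ?_, ?_, ?_, ?_, ?_⟩
  · rw [continuousOn_iff_isClosed]
    intro F hF
    refine ⟨φ '' (Icc 0 1 ∩ β ⁻¹' F),
      ((isCompact_Icc.inter_right (hF.preimage hβ)).image hφ).isClosed, ?_⟩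
    ext y
    constructor
    · rintro ⟨h1, h2⟩
      exact ⟨⟨σ y, ⟨hσ1 y h2, h1⟩, hσ2 y h2⟩, h2⟩
    · rintro ⟨⟨x, ⟨hx, hxF⟩, hxy⟩, h2⟩
      refine ⟨?_, h2⟩
      have : β (σ y) = β x := heq'' _ (hσ1 y h2) _ hx (by rw [hσ2 y h2, hxy])
      change β (σ y) ∈ F
      rw [this]; exact hxF
  · intro y hy y' hy' h
    rw [← hσ2 y hy, ← hσ2 y' hy']
    exact heq' _ (hσ1 y hy) _ (hσ1 y' hy') h
  · rw [← hβ0]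
    exact heq'' _ (hσ1 _ m0) _ z0 (hσ2 _ m0)
  · rw [← hβ1]
    exact heq'' _ (hσ1 _ m1) _ z1 (hσ2 _ m1)
  · intro y hy
    exact hrange _ (hσ1 y hy)

lemma eq_of_exp_eq_of_norm_lt {a b : ℂ} (h : Complex.exp a = Complex.exp b) (hn : ‖a - b‖ < 1) :
    a = b := by
  obtain ⟨n, hn'⟩ := Complex.exp_eq_exp_iff_exists_int.1 h
  have h2 : a - b = n * (2 * Real.pi * Complex.I) := by rw [hn']; ring
  rw [h2] at hn
  simp only [norm_mul, Complex.norm_intCast, Complex.norm_ofNat, Complex.norm_real,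
    Complex.norm_I, mul_one, Real.norm_of_nonneg Real.pi_pos.le] at hn
  have hπ := Real.pi_gt_three
  have : |(n : ℝ)| < 1 := by nlinarith [abs_nonneg (n : ℝ)]
  have hn0 : n = 0 := by
    have : |n| < 1 := by exact_mod_cast this
    exact Int.abs_lt_one_iff.1 this
  rw [hn', hn0]; simp

lemma sub_eq_sub_of_exp_eq {S : Set ℝ} (hS : IsPreconnected S) {f g : ℝ → ℂ}
    (hf : ContinuousOn f S) (hg : ContinuousOn g S)
    (h : ∀ x ∈ S, Complex.exp (f x) = Complex.exp (g x)) {x y : ℝ} (hx : x ∈ S) (hy : y ∈ S) :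
    f x - g x = f y - g y := by
  refine hS.induction₂ (fun x y => f x - g x = f y - g y) ?_
    (fun _ _ _ _ _ _ h1 h2 => h1.trans h2) (fun _ _ _ _ h => h.symm) hx hy
  intro x hx
  have hc := (hf.sub hg) x hx
  filter_upwards [hc (Metric.ball_mem_nhds _ one_pos), self_mem_nhdsWithin] with y hy hyS
  have hy' : ‖(f y - g y) - (f x - g x)‖ < 1 := by
    simpa [dist_eq_norm] using hy
  refine (eq_of_exp_eq_of_norm_lt ?_ hy').symm
  rw [Complex.exp_sub, Complex.exp_sub, h x hx, h y hyS, div_self (Complex.exp_ne_zero _),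
    div_self (Complex.exp_ne_zero _)]

def HasLog (K : Set ℂ) (p : ℂ) : Prop :=
  ∃ g : K → ℂ, Continuous g ∧ ∀ z : K, Complex.exp (g z) = z - p

lemma not_hasLog_of_bounded {L : Set ℂ} (hL : IsClosed L) {p : ℂ} (hp : p ∈ Lᶜ)
    (hbd : Bornology.IsBounded (connectedComponentIn Lᶜ p)) : ¬ HasLog L p := by
  classical
  rintro ⟨g, hg, hexp⟩
  obtain ⟨G, hG⟩ := ContinuousMap.exists_restrict_eq hL (⟨g, hg⟩ : C(L, ℂ))
  have hGL : ∀ z ∈ L, Complex.exp (G z) = z - p := fun z hz => by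
    have := congrArg (fun F : C(L, ℂ) => F ⟨z, hz⟩) hG
    simp at this
    rw [this]; exact hexp ⟨z, hz⟩
  set U := connectedComponentIn Lᶜ p with hU
  have hUo : IsOpen U := hL.isOpen_compl.connectedComponentIn
  have hpU : p ∈ U := mem_connectedComponentIn hp
  have hfr : ∀ z ∈ frontier U, z ∈ L := by
    intro z hz
    by_contra hzL
    have ho : IsOpen (connectedComponentIn Lᶜ z) := hL.isOpen_compl.connectedComponentIn
    obtain ⟨y, hy1, hy2⟩ := mem_closure_iff.1 hz.1 _ ho (mem_connectedComponentIn hzL)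
    have e1 := connectedComponentIn_eq hy1
    have e2 := connectedComponentIn_eq hy2
    have : z ∈ U := by
      rw [hU, e2, ← e1]; exact mem_connectedComponentIn hzL
    exact hz.2 (by rwa [hUo.interior_eq])
  let F : ℂ → ℂ := fun z => if z ∈ U then Complex.exp (G z) else z - p
  have hF : Continuous F := by
    refine continuous_if (fun z hz => hGL z (hfr z hz)) ?_ ?_
    · exact (Complex.continuous_exp.comp G.continuous).continuousOn
    · fun_prop
  have hF0 : ∀ z, F z ≠ 0 := by
    intro z
    simp only [F]
    split_ifs with h
    · exact Complex.exp_ne_zero _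
    · intro h0
      rw [sub_eq_zero] at h0
      exact h (h0 ▸ hpU)
  have hsc : IsSimplyConnected (univ : Set ℂ) := by
    have : ContractibleSpace (univ : Set ℂ) := convex_univ.contractibleSpace univ_nonempty
    exact (inferInstance : SimplyConnectedSpace (univ : Set ℂ))
  obtain ⟨h, hh, hhe⟩ := Complex.exists_continuousOn_eqOn_exp_comp hsc isOpen_univ
    hF.continuousOn (by rintro ⟨z, _, hz⟩; exact hF0 z hz)
  obtain ⟨R, hR, hRU⟩ := hbd.subset_ball_lt 0 p
  have hh' : Continuous h := continuousOn_univ.1 hh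
  have := sub_eq_sub_of_exp_eq (S := univ) isPreconnected_univ
    (f := fun θ : ℝ => h (p + R * Complex.exp (θ * Complex.I)))
    (g := fun θ : ℝ => Real.log R + θ * Complex.I)
    (by fun_prop) (by fun_prop) (fun θ _ => by
      have hnot : p + R * Complex.exp (θ * Complex.I) ∉ U := fun hmem => by
        have := hRU hmem
        rw [Metric.mem_ball, dist_eq_norm, add_sub_cancel_left, norm_mul,
          Complex.norm_exp_ofReal_mul_I, Complex.norm_real, Real.norm_of_nonneg hR.le] at this
        linarith
      have := hhe (mem_univ (p + R * Complex.exp (θ * Complex.I)))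
      simp only [Function.comp, F, if_neg hnot] at this
      rw [this, Complex.exp_add, ← Complex.ofReal_exp, Real.exp_log hR]
      ring) (mem_univ 0) (mem_univ (2 * Real.pi))
  simp at this

lemma HasLog.move {K : Set ℂ} {x y : ℂ} (h : HasLog K x) (hxy : ∀ z ∈ K, ‖x - y‖ < ‖z - x‖) :
    HasLog K y := by
  obtain ⟨g, hg, he⟩ := h
  have hne : ∀ z : K, (z : ℂ) - x ≠ 0 := fun z hz => by
    have := hxy z z.2
    rw [hz, norm_zero] at this
    linarith [norm_nonneg (x - y)]
  have hs : ∀ z : K, 1 + (x - y) / ((z : ℂ) - x) ∈ Complex.slitPlane := fun z => by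
    apply Complex.mem_slitPlane_of_norm_lt_one
    rw [norm_div, div_lt_one (norm_pos_iff.2 (hne z))]
    exact hxy z z.2
  refine ⟨fun z => g z + Complex.log (1 + (x - y) / ((z : ℂ) - x)), ?_, fun z => ?_⟩
  · refine hg.add (Continuous.clog ?_ hs)
    exact continuous_const.add (continuous_const.div (by fun_prop) hne)
  · rw [Complex.exp_add, he, Complex.exp_log (Complex.slitPlane_ne_zero (hs z))]
    have := hne z
    field_simp
    ring

lemma hasLog_far {K : Set ℂ} {q : ℂ} (hq : ∀ z ∈ K, ‖z‖ < ‖q‖) (hq0 : q ≠ 0) : HasLog K q := by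
  have hs : ∀ z : K, 1 + -((z : ℂ) / q) ∈ Complex.slitPlane := fun z => by
    apply Complex.mem_slitPlane_of_norm_lt_one
    rw [norm_neg, norm_div, div_lt_one (norm_pos_iff.2 hq0)]
    exact hq z z.2
  refine ⟨fun z => Complex.log (-q) + Complex.log (1 + -((z : ℂ) / q)), ?_, fun z => ?_⟩
  · exact continuous_const.add (Continuous.clog (by fun_prop) hs)
  · rw [Complex.exp_add, Complex.exp_log (neg_ne_zero.2 hq0),
      Complex.exp_log (Complex.slitPlane_ne_zero (hs z))]
    field_simp
    ring

lemma bounded_of_not_hasLog {K : Set ℂ} (hK : IsCompact K) {p : ℂ} (hp : p ∈ Kᶜ)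
    (h : ¬ HasLog K p) : Bornology.IsBounded (connectedComponentIn Kᶜ p) := by
  by_contra hub
  obtain ⟨R, hR, hRK⟩ := hK.isBounded.subset_ball_lt 0 0
  obtain ⟨q, hq, hqR⟩ : ∃ q ∈ connectedComponentIn Kᶜ p, R ≤ ‖q‖ := by
    by_contra hc
    push Not at hc
    exact hub (Metric.isBounded_ball.subset (fun q hq => by
      simpa using hc q hq : connectedComponentIn Kᶜ p ⊆ Metric.ball 0 R))
  have hlq : HasLog K q := by
    refine hasLog_far (fun z hz => ?_) ?_
    · have := hRK hz
      rw [mem_ball_zero_iff] at this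
      linarith
    · rw [← norm_pos_iff]; linarith
  have : HasLog K p ↔ HasLog K q := by
    refine (isPreconnected_connectedComponentIn (F := Kᶜ) (x := p)).induction₂
      (fun x y => HasLog K x ↔ HasLog K y) ?_ (fun _ _ _ _ _ _ h1 h2 => h1.trans h2)
      (fun _ _ _ _ h => h.symm) (mem_connectedComponentIn hp) hq
    intro x hx
    have hxK := connectedComponentIn_subset _ _ hx
    obtain ⟨δ, hδ, hb⟩ := Metric.isOpen_iff.1 hK.isClosed.isOpen_compl x hxK
    filter_upwards [mem_nhdsWithin_of_mem_nhds
      (Metric.ball_mem_nhds x (show 0 < δ / 2 by positivity))] with y hy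
    rw [Metric.mem_ball, dist_eq_norm] at hy
    have hz : ∀ z ∈ K, δ ≤ ‖z - x‖ := fun z hz => by
      by_contra hc
      exact hb (by rw [Metric.mem_ball, dist_eq_norm]; exact not_le.1 hc) hz
    refine ⟨fun h => h.move fun z hzK => ?_, fun h => h.move fun z hzK => ?_⟩
    · rw [norm_sub_rev]; linarith [hz z hzK]
    · have := hz z hzK
      have h3 : ‖z - x‖ ≤ ‖z - y‖ + ‖y - x‖ := by
        have := norm_add_le (z - y) (y - x)
        rwa [sub_add_sub_cancel] at this
      linarith
  exact h (this.2 hlq)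

/-- The preimage of `L` under `w ↦ p + exp w`. -/
def expPre (L : Set ℂ) (p : ℂ) : Set ℂ := {w | p + Complex.exp w ∈ L}

noncomputable def expMap (L : Set ℂ) (p : ℂ) (m : expPre L p) : L := ⟨p + Complex.exp m, m.2⟩

lemma continuous_expMap (L : Set ℂ) (p : ℂ) : Continuous (expMap L p) := by
  unfold expMap
  fun_prop

lemma exists_local_section {L : Set ℂ} {p : ℂ} (hp : p ∉ L) (m : expPre L p) :
    ∃ Ψ : L → expPre L p, (∀ z, expMap L p (Ψ z) = z) ∧ Ψ (expMap L p m) = m ∧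
      (∀ᶠ z in 𝓝 (expMap L p m), ContinuousAt Ψ z) ∧ ∀ᶠ x in 𝓝 m, Ψ (expMap L p x) = x := by
  obtain ⟨w, hw⟩ := m
  let ψ : ℂ → ℂ := fun z => w + Complex.log ((z - p) * Complex.exp (-w))
  have hψ : ∀ z ∈ L, p + Complex.exp (ψ z) = z := fun z hz => by
    have : z - p ≠ 0 := fun h => hp (sub_eq_zero.1 h ▸ hz)
    simp only [ψ]
    rw [Complex.exp_add, Complex.exp_log (mul_ne_zero this (Complex.exp_ne_zero _)),
      mul_left_comm, ← Complex.exp_add]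
    simp
  have hψ2 : ∀ x : ℂ, |(x - w).im| < Real.pi → ψ (p + Complex.exp x) = x := fun x hx => by
    rw [abs_lt] at hx
    simp only [ψ]
    rw [add_sub_cancel_left, ← Complex.exp_add, ← sub_eq_add_neg, Complex.log_exp hx.1 hx.2.le]
    ring
  refine ⟨fun z => ⟨ψ z, by
    change p + Complex.exp (ψ z) ∈ L
    rw [hψ z z.2]; exact z.2⟩, fun z => Subtype.ext (hψ z z.2), Subtype.ext ?_, ?_, ?_⟩
  · exact hψ2 w (by simpa using Real.pi_pos)
  · have hop : IsOpen {z : L | ((z : ℂ) - p) * Complex.exp (-w) ∈ Complex.slitPlane} :=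
      Complex.isOpen_slitPlane.preimage (by fun_prop)
    filter_upwards [hop.mem_nhds (by
      change (p + Complex.exp w - p) * Complex.exp (-w) ∈ Complex.slitPlane
      rw [add_sub_cancel_left, ← Complex.exp_add]
      simp)] with z hz
    refine Topology.IsInducing.subtypeVal.continuousAt_iff.2 ?_
    refine continuousAt_const.add (ContinuousAt.clog ?_ hz)
    fun_prop
  · have hop : IsOpen {x : expPre L p | |((x : ℂ) - w).im| < Real.pi} :=
      isOpen_lt (by fun_prop) continuous_const
    filter_upwards [hop.mem_nhds (by simpa using Real.pi_pos)] with x hx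
    exact Subtype.ext (hψ2 x hx)

lemma locallyConnected_expPre {L : Set ℂ} {p : ℂ} (hp : p ∉ L) [LocallyConnectedSpace L] :
    LocallyConnectedSpace (expPre L p) := by
  rw [locallyConnectedSpace_iff_connected_subsets]
  intro m U hU
  obtain ⟨Ψ, h1, h2, h3, h4⟩ := exists_local_section hp m
  have hc : ContinuousAt Ψ (expMap L p m) := h3.self_of_nhds
  have hU' : Ψ ⁻¹' U ∈ 𝓝 (expMap L p m) := hc (by rwa [h2])
  obtain ⟨W, hW, hWo, hmW, hWc⟩ :=
    locallyConnectedSpace_iff_subsets_isOpen_isConnected.1 ‹LocallyConnectedSpace L› _ _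
      (inter_mem hU' h3)
  refine ⟨Ψ '' W, ?_, hWc.isPreconnected.image _ fun z hz =>
    (hW hz).2.continuousWithinAt, image_subset_iff.2 fun z hz => (hW hz).1⟩
  filter_upwards [h4, (continuous_expMap L p).continuousAt (hWo.mem_nhds hmW)] with x hx hxW
  exact ⟨_, hxW, hx⟩

noncomputable def expShift (L : Set ℂ) (p : ℂ) (n : ℤ) (m : expPre L p) : expPre L p :=
  ⟨m + n * (2 * Real.pi * Complex.I), by
    change p + Complex.exp _ ∈ L
    rw [Complex.exp_periodic.int_mul n]; exact m.2⟩

lemma exists_component_pair {L : Set ℂ} {p : ℂ} (hp : p ∉ L) [LocallyConnectedSpace L]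
    (hLc : IsConnected L) (hlog : ¬ HasLog L p) :
    ∃ a b : expPre L p, b ∈ connectedComponent a ∧
      Complex.exp (a : ℂ) = Complex.exp (b : ℂ) ∧ a ≠ b := by
  by_contra hcon
  push Not at hcon
  have := locallyConnected_expPre (p := p) hp
  have : PreconnectedSpace L := Subtype.preconnectedSpace hLc.isPreconnected
  have hsurj : ∀ z : L, ∃ m, expMap L p m = z := fun z => by
    have : (z : ℂ) - p ≠ 0 := fun h => hp (sub_eq_zero.1 h ▸ z.2)
    have e : p + Complex.exp (Complex.log ((z : ℂ) - p)) = z := by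
      rw [Complex.exp_log this]; ring
    exact ⟨⟨Complex.log ((z : ℂ) - p), by
      change p + Complex.exp _ ∈ L
      rw [e]; exact z.2⟩, Subtype.ext e⟩
  have hopen : ∀ a : expPre L p, IsOpen (expMap L p '' connectedComponent a) := by
    intro a
    rw [isOpen_iff_mem_nhds]
    rintro _ ⟨m, hm, rfl⟩
    obtain ⟨Ψ, h1, h2, h3, h4⟩ := exists_local_section hp m
    have hc : ContinuousAt Ψ (expMap L p m) := h3.self_of_nhds
    have hU' : Ψ ⁻¹' connectedComponent a ∈ 𝓝 (expMap L p m) :=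
      hc (isOpen_connectedComponent.mem_nhds (by rwa [h2]))
    filter_upwards [hU'] with z hz
    exact ⟨Ψ z, hz, h1 z⟩
  obtain ⟨z₁, hz₁⟩ := hLc.nonempty
  obtain ⟨a, ha⟩ := hsurj ⟨z₁, hz₁⟩
  have hclosed : IsClosed (expMap L p '' connectedComponent a) := by
    rw [← isOpen_compl_iff, isOpen_iff_mem_nhds]
    intro z hz
    obtain ⟨b, rfl⟩ := hsurj z
    refine mem_of_superset ((hopen b).mem_nhds ⟨b, mem_connectedComponent, rfl⟩) ?_
    rintro _ ⟨m, hm, rfl⟩ ⟨c, hc, hcm⟩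
    have he : Complex.exp (c : ℂ) = Complex.exp (m : ℂ) :=
      add_left_cancel (congrArg Subtype.val hcm)
    obtain ⟨n, hn⟩ := Complex.exp_eq_exp_iff_exists_int.1 he
    have hT : Continuous (expShift L p n) := by
      unfold expShift; fun_prop
    have hTm : expShift L p n m = c := Subtype.ext hn.symm
    have hTb : expShift L p n b ∈ connectedComponent a := by
      have h1 := hT.image_connectedComponent_subset m
        ⟨b, by rw [← connectedComponent_eq hm]; exact mem_connectedComponent, rfl⟩
      rw [hTm, ← connectedComponent_eq hc] at h1
      exact h1
    refine hz ⟨_, hTb, Subtype.ext ?_⟩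
    change p + Complex.exp _ = p + Complex.exp _
    simp only [expShift]
    rw [Complex.exp_periodic.int_mul n]
  have huniv : expMap L p '' connectedComponent a = univ :=
    IsClopen.eq_univ ⟨hclosed, hopen a⟩ ⟨_, a, mem_connectedComponent, rfl⟩
  have hg : ∀ z : L, ∃ m, m ∈ connectedComponent a ∧ expMap L p m = z := fun z => by
    have : z ∈ expMap L p '' connectedComponent a := huniv ▸ mem_univ z
    exact this
  choose g hg1 hg2 using hg
  refine hlog ⟨fun z => g z, ?_, fun z => ?_⟩
  · refine continuous_subtype_val.comp (continuous_iff_continuousAt.2 fun z => ?_)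
    obtain ⟨Ψ, h1, h2, h3, h4⟩ := exists_local_section hp (g z)
    rw [hg2] at h2 h3
    have hc : ContinuousAt Ψ z := h3.self_of_nhds
    refine hc.congr ?_
    have hU' : Ψ ⁻¹' connectedComponent a ∈ 𝓝 z :=
      hc (isOpen_connectedComponent.mem_nhds (by rw [h2]; exact hg1 z))
    filter_upwards [hU'] with y hy
    refine hcon _ _ ?_ ?_
    · rw [← connectedComponent_eq hy]; exact hg1 y
    · have : expMap L p (Ψ y) = expMap L p (g y) := by rw [h1, hg2]
      exact add_left_cancel (congrArg Subtype.val this)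
  · have : p + Complex.exp (g z : ℂ) = z := congrArg Subtype.val (hg2 z)
    rw [← this]; ring

theorem complex_main {L : Set ℂ} (hLcpt : IsCompact L) (hLconn : IsConnected L)
    (hLlc : LocallyConnectedSpace L) {p : ℂ} (hp : p ∈ Lᶜ)
    (hbd : Bornology.IsBounded (connectedComponentIn Lᶜ p)) :
    ∃ s t : ℝ, s < t ∧ ∃ δ : ℝ → ℂ, ContinuousOn δ (Icc s t) ∧ δ s = δ t ∧ InjOn δ (Ico s t) ∧
      δ '' Icc s t ⊆ L ∧ Bornology.IsBounded (connectedComponentIn (δ '' Icc s t)ᶜ p) := by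
  obtain ⟨a, b, hab, hexp, hne⟩ :=
    exists_component_pair hp hLconn (not_hasLog_of_bounded hLcpt.isClosed hp hbd)
  have := locallyConnected_expPre (p := p) hp
  have hMc : IsClosed (expPre L p) := hLcpt.isClosed.preimage
    (show Continuous fun w : ℂ => p + Complex.exp w by fun_prop)
  have : CompleteSpace (expPre L p) := hMc.completeSpace_coe
  obtain ⟨γ, hγ, hγ0, hγ1⟩ := exists_path_of_mem_component hab
  obtain ⟨c, d, hcd, α, hα, hinj, hαc, hαd, hαr⟩ := exists_arc (γ := fun t => (γ t : ℂ))
    (by fun_prop) (by rw [hγ0, hγ1]; exact fun h => hne (Subtype.ext h))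
  rw [hγ0] at hαc
  rw [hγ1] at hαd
  have hαM : ∀ y ∈ Icc c d, p + Complex.exp (α y) ∈ L := fun y hy => by
    obtain ⟨x, _, hx⟩ := hαr y hy
    rw [hx]; exact (γ x).2
  let P : Set (ℝ × ℝ) := {q | q ∈ Icc c d ×ˢ Icc c d ∧ (q.1 ≤ q.2 ∧
    Complex.exp (α q.1) = Complex.exp (α q.2) ∧ 1 ≤ ‖α q.1 - α q.2‖)}
  have hPc : IsCompact P := by
    let A : ℝ → ℂ := fun t => α (max c (min t d))
    have hA : Continuous A := by
      refine hα.comp_continuous (f := fun t : ℝ => max c (min t d)) (by fun_prop) fun t => ?_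
      exact ⟨le_max_left _ _, max_le hcd.le (min_le_right _ _)⟩
    have hAα : ∀ t ∈ Icc c d, A t = α t := fun t ht => by
      simp only [A]; rw [min_eq_left ht.2, max_eq_right ht.1]
    have : P = (Icc c d ×ˢ Icc c d) ∩ {q | q.1 ≤ q.2 ∧
        Complex.exp (A q.1) = Complex.exp (A q.2) ∧ 1 ≤ ‖A q.1 - A q.2‖} := by
      ext q
      simp only [P, mem_inter_iff, mem_ofPred_eq]
      refine and_congr_right fun hq => ?_
      rw [hAα _ hq.1, hAα _ hq.2]
    rw [this]
    refine (isCompact_Icc.prod isCompact_Icc).inter_right ?_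
    have c1 : IsClosed {q : ℝ × ℝ | q.1 ≤ q.2} := isClosed_le (by fun_prop) (by fun_prop)
    have c2 : IsClosed {q : ℝ × ℝ | Complex.exp (A q.1) = Complex.exp (A q.2)} :=
      isClosed_eq (by fun_prop) (by fun_prop)
    have c3 : IsClosed {q : ℝ × ℝ | 1 ≤ ‖A q.1 - A q.2‖} :=
      isClosed_le (by fun_prop) (by fun_prop)
    exact c1.inter (c2.inter c3)
  have hmemP : ∀ x ∈ Icc c d, ∀ y ∈ Icc c d, x < y → Complex.exp (α x) = Complex.exp (α y) →
      (x, y) ∈ P := by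
    intro x hx y hy hxy he
    refine ⟨⟨hx, hy⟩, hxy.le, he, ?_⟩
    by_contra hc
    exact hxy.ne (hinj hx hy (eq_of_exp_eq_of_norm_lt he (not_le.1 hc)))
  obtain ⟨⟨s, t⟩, hst, hmin⟩ := hPc.exists_isMinOn
    ⟨(c, d), hmemP c ⟨le_rfl, hcd.le⟩ d ⟨hcd.le, le_rfl⟩ hcd (by rw [hαc, hαd, hexp])⟩
    (show ContinuousOn (fun q : ℝ × ℝ => q.2 - q.1) P by fun_prop)
  obtain ⟨⟨hs, ht⟩, hle, he, hnorm⟩ := hst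
  dsimp only at hs ht hle he hnorm
  have hlt : s < t := by
    refine lt_of_le_of_ne hle fun h => ?_
    rw [h, sub_self, norm_zero] at hnorm
    linarith
  have hsub : Icc s t ⊆ Icc c d := Icc_subset_Icc hs.1 ht.2
  have hαst : ContinuousOn α (Icc s t) := hα.mono hsub
  have hcont : ContinuousOn (fun y => p + Complex.exp (α y)) (Icc s t) := by fun_prop
  have hJL : (fun y => p + Complex.exp (α y)) '' Icc s t ⊆ L := by
    rintro _ ⟨y, hy, rfl⟩
    exact hαM y (hsub hy)
  refine ⟨s, t, hlt, fun y => p + Complex.exp (α y), hcont, by simp only [he], ?_, hJL, ?_⟩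
  · have key : ∀ x ∈ Ico s t, ∀ y ∈ Ico s t, x < y → Complex.exp (α x) = Complex.exp (α y) →
        False := by
      intro x hx y hy hxy hexy
      have : t - s ≤ y - x := hmin (hmemP x (hsub ⟨hx.1, hx.2.le⟩) y (hsub ⟨hy.1, hy.2.le⟩) hxy hexy)
      linarith [hx.1, hy.2]
    intro x hx y hy hxy
    have hxy' := add_left_cancel hxy
    rcases lt_trichotomy x y with h | h | h
    · exact (key x hx y hy h hxy').elim
    · exact h
    · exact (key y hy x hx h hxy'.symm).elim
  · refine bounded_of_not_hasLog (isCompact_Icc.image_of_continuousOn hcont)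
      (fun h => hp (hJL h)) ?_
    rintro ⟨g, hg, hge⟩
    let g' : ℂ → ℂ := Function.extend Subtype.val g 0
    have hg' : ContinuousOn g' ((fun y => p + Complex.exp (α y)) '' Icc s t) := by
      rw [continuousOn_iff_continuous_domRestrict]
      convert hg using 1
      ext z
      exact Subtype.val_injective.extend_apply g 0 z
    have hge' : ∀ z ∈ (fun y => p + Complex.exp (α y)) '' Icc s t, Complex.exp (g' z) = z - p := by
      intro z hz
      rw [← hge ⟨z, hz⟩]
      congr 1
      exact Subtype.val_injective.extend_apply g 0 ⟨z, hz⟩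
    have hs' : s ∈ Icc s t := ⟨le_rfl, hle⟩
    have ht' : t ∈ Icc s t := ⟨hle, le_rfl⟩
    have := sub_eq_sub_of_exp_eq (S := Icc s t) isPreconnected_Icc
      (f := fun y => g' (p + Complex.exp (α y))) (g := α)
      (hg'.comp hcont (mapsTo_image _ _)) hαst (fun y hy => by
        rw [hge' _ (mem_image_of_mem _ hy)]; ring) hs' ht'
    simp only [he] at this
    have h2 : α s = α t := sub_right_injective this
    rw [h2, sub_self, norm_zero] at hnorm
    linarith

theorem loop_isSimpleClosedCurve {s t : ℝ} (hst : s < t) {δ : ℝ → EuclideanSpace ℝ (Fin 2)}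
    (hδ : ContinuousOn δ (Icc s t)) (hclose : δ s = δ t) (hinj : InjOn δ (Ico s t)) :
    IsSimpleClosedCurve (δ '' Icc s t) := by
  have hT : 0 < t - s := sub_pos.2 hst
  have : Fact (0 < t - s) := ⟨hT⟩
  have hts : s + (t - s) = t := by ring
  let e := Complex.orthonormalBasisOneI.repr
  let g : ↥(Metric.sphere (0 : EuclideanSpace ℝ (Fin 2)) 1) → Circle := fun x =>
    ⟨e.symm x, by
      have hx := x.2
      rw [mem_sphere_zero_iff_norm] at hx
      exact mem_sphere_zero_iff_norm.2 ((e.symm.norm_map x).trans hx)⟩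
  have hg : Continuous g := by
    refine Continuous.subtype_mk ?_ _
    exact e.symm.continuous.comp continuous_subtype_val
  have hgi : Function.Injective g := fun x y h =>
    Subtype.ext (e.symm.injective (congrArg Subtype.val h))
  have hgs : Function.Surjective g := fun z =>
    ⟨⟨e (z : ℂ), by
      rw [mem_sphere_zero_iff_norm, LinearIsometryEquiv.norm_map]; exact Circle.norm_coe z⟩,
      Subtype.ext (e.symm_apply_apply _)⟩
  let h := AddCircle.homeomorphCircle hT.ne'
  let l := AddCircle.liftIco (t - s) s δ
  have hl : Continuous l :=
    AddCircle.liftIco_continuous (by rw [hts]; exact hclose) (by rw [hts]; exact hδ)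
  have hmem : ∀ x : AddCircle (t - s),
      ((AddCircle.equivIco (t - s) s x : Ico s (s + (t - s))) : ℝ) ∈ Ico s t := fun x =>
    ⟨(AddCircle.equivIco (t - s) s x).2.1,
      (AddCircle.equivIco (t - s) s x).2.2.trans_eq hts⟩
  have hli : Function.Injective l := by
    intro x y hxy
    refine (AddCircle.equivIco (t - s) s).injective (Subtype.ext ?_)
    exact hinj (hmem x) (hmem y) hxy
  have hlr : range l = δ '' Icc s t := by
    ext z
    constructor
    · rintro ⟨x, rfl⟩
      exact ⟨_, Ico_subset_Icc_self (hmem x), rfl⟩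
    · rintro ⟨x, hx, rfl⟩
      rcases eq_or_lt_of_le hx.2 with rfl | hlt
      · exact ⟨(s : ℝ), (AddCircle.liftIco_coe_apply (by rw [hts]; exact ⟨le_rfl, hst⟩)).trans hclose⟩
      · exact ⟨(x : ℝ), AddCircle.liftIco_coe_apply (by rw [hts]; exact ⟨hx.1, hlt⟩)⟩
  refine ⟨l ∘ h.symm ∘ g, hl.comp (h.symm.continuous.comp hg),
    hli.comp (h.symm.injective.comp hgi), ?_⟩
  rw [(h.symm.surjective.comp hgs).range_comp, hlr]

end Helpers

/-- If a locally connected continuum `L` in the plane separates a point `p` from infinity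
(i.e. `p` lies in a bounded component of `ℝ² \ L`), then some simple closed curve `J ⊆ L`
already separates `p` from infinity. -/
theorem exists_simple_closed_curve_separating
    (L : Set (EuclideanSpace ℝ (Fin 2)))
    (hLcpt : IsCompact L) (hLconn : IsConnected L) (hLlc : LocallyConnectedSpace L)
    (p : EuclideanSpace ℝ (Fin 2)) (hp : p ∈ Lᶜ)
    (hbd : Bornology.IsBounded (connectedComponentIn Lᶜ p)) :
    ∃ J ⊆ L, IsSimpleClosedCurve J ∧
      Bornology.IsBounded (connectedComponentIn Jᶜ p) := by
  let e := Complex.orthonormalBasisOneI.repr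
  let h := e.toHomeomorph
  have hlc : LocallyConnectedSpace (h.symm '' L) :=
    (h.symm.image L).symm.isOpenEmbedding.locallyConnectedSpace
  have hcompl : ∀ S : Set (EuclideanSpace ℝ (Fin 2)), h.symm '' Sᶜ = (h.symm '' S)ᶜ :=
    fun S => Set.image_compl_eq h.symm.bijective
  have hp' : h.symm p ∈ (h.symm '' L)ᶜ := by
    rw [← hcompl]; exact Set.mem_image_of_mem _ hp
  obtain ⟨s, t, hst, δ, hδ, hclose, hinj, hsub, hJ⟩ := complex_main
    (L := h.symm '' L) (hLcpt.image h.symm.continuous)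
    (hLconn.image _ h.symm.continuous.continuousOn) hlc hp' (by
      rw [← hcompl, ← h.symm.image_connectedComponentIn hp]
      exact e.symm.isometry.lipschitz.isBounded_image hbd)
  have hδe : (h ∘ δ) '' Set.Icc s t = h '' (δ '' Set.Icc s t) := Set.image_comp _ _ _
  refine ⟨(h ∘ δ) '' Set.Icc s t, ?_, loop_isSimpleClosedCurve hst
    (h.continuous.comp_continuousOn hδ) (congrArg h hclose) (h.injective.comp_injOn hinj), ?_⟩
  · rw [hδe]
    rintro _ ⟨z, hz, rfl⟩
    obtain ⟨y, hy, rfl⟩ := hsub hz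
    rwa [h.apply_symm_apply]
  · have hpJ : h.symm p ∈ (δ '' Set.Icc s t)ᶜ := fun hh => hp' (hsub hh)
    have := e.isometry.lipschitz.isBounded_image hJ
    change Bornology.IsBounded (h '' _) at this
    rw [h.image_connectedComponentIn hpJ, h.apply_symm_apply,
      Set.image_compl_eq h.bijective, ← hδe] at this
    exact this
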